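/- arXiv:2001.04525 — 5 statements merged into one kernel-verified Lean document; each statement's English description precedes it below -/
import Mathlib

section
/- Let k ≥ 1 and let b₁, b₂, b₃ : Fin k → Bool be three pairwise distinct Boolean strings (the robots' IDs), and let s₁, s₂, s₃ : Bool be arbitrary (the robots' chiralities). Then there exists an index i : Fin k such that the three Boolean values xor s₁ (b₁ i), xor s₂ (b₂ i), xor s₃ (b₃ i) are not all equal. (In the exploration algorithm this says: among the first k phases of Stage 1 there is a phase in which one robot moves in the direction opposite to the direction followed by the other two robots.) -/
/-- Lemma 3 (lem:phase): given three pairwise distinct ID bit-strings `b₁ b₂ b₃` of length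
`k ≥ 1` and arbitrary chiralities `s₁ s₂ s₃`, there is an index `i` at which the three
direction bits `xor sⱼ (bⱼ i)` are not all equal, i.e. some robot moves opposite to the
other two. -/
theorem stage1_phase_exists_opposite (k : ℕ) (hk : 1 ≤ k)
    (b₁ b₂ b₃ : Fin k → Bool)
    (h12 : b₁ ≠ b₂) (h13 : b₁ ≠ b₃) (h23 : b₂ ≠ b₃)
    (s₁ s₂ s₃ : Bool) :
    ∃ i : Fin k,
      ¬ (xor s₁ (b₁ i) = xor s₂ (b₂ i) ∧ xor s₂ (b₂ i) = xor s₃ (b₃ i)) := by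
  by_contra hne
  have h : ∀ i : Fin k,
      xor s₁ (b₁ i) = xor s₂ (b₂ i) ∧ xor s₂ (b₂ i) = xor s₃ (b₃ i) := by
    intro i
    by_contra hi
    exact hne ⟨i, hi⟩
  -- two of the three chiralities agree, which forces the corresponding IDs to agree
  have key : s₁ = s₂ ∨ s₁ = s₃ ∨ s₂ = s₃ := by
    cases s₁ <;> cases s₂ <;> cases s₃ <;> simp
  rcases key with e | e | e
  · subst e
    exact h12 (funext fun i => Bool.xor_right_inj.mp (h i).1)
  · subst e
    exact h13 (funext fun i => Bool.xor_right_inj.mp ((h i).1.trans (h i).2))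
  · subst e
    exact h23 (funext fun i => Bool.xor_right_inj.mp (h i).2)
end

section
/- Let n ≥ 3. Consider three robots on the dynamic ring ZMod n with arbitrary start nodes and fixed attempted directions d₁, d₂, d₃ : Bool (true = clockwise, false = counterclockwise) that are not all equal, where each robot attempts to move in its fixed direction in every round. Then for every adversary e : ℕ → Option (ZMod n), some two of the three robots meet within n − 2 rounds: there exist distinct indices a ≠ b among {1,2,3} such that either p_a t = p_b t for some t ≤ n − 2, or there is a round t with t + 1 ≤ n − 2 in which p_a (t+1) = p_b t, p_b (t+1) = p_a t and p_a t ≠ p_b t (the robots cross the same edge in opposite directions). -/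
/-- One round of movement on the dynamic ring `ZMod n`: a robot at node `p` attempting to
move clockwise (`dir = true`) moves to `p + 1` unless the adversary removed edge `p`;
attempting counterclockwise (`dir = false`) it moves to `p - 1` unless edge `p - 1` was
removed. -/
def ringStep (n : ℕ) (e : Option (ZMod n)) (dir : Bool) (p : ZMod n) : ZMod n :=
  if dir then (if e ≠ some p then p + 1 else p)
  else (if e ≠ some (p - 1) then p - 1 else p)

/-- Position of a robot with start node `v`, per-round attempted directions `d` and
adversary `e`. -/
def ringPos (n : ℕ) (e : ℕ → Option (ZMod n)) (d : ℕ → Bool) (v : ZMod n) : ℕ → ZMod n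
  | 0 => v
  | t + 1 => ringStep n (e t) (d t) (ringPos n e d v t)

/-- Two robots with position functions `p q` meet within `R` rounds: same node at some
time `t ≤ R`, or they cross the same edge in opposite directions in a round completed by
time `R`. -/
def meetsWithin (n R : ℕ) (p q : ℕ → ZMod n) : Prop :=
  (∃ t ≤ R, p t = q t) ∨
  (∃ t, t + 1 ≤ R ∧ p (t + 1) = q t ∧ q (t + 1) = p t ∧ p t ≠ q t)

theorem meets_symm {n R : ℕ} {p q : ℕ → ZMod n} (h : meetsWithin n R p q) :
    meetsWithin n R q p := by
  rcases h with ⟨t, h1, h2⟩ | ⟨t, h1, h2, h3, h4⟩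
  · exact Or.inl ⟨t, h1, h2.symm⟩
  · exact Or.inr ⟨t, h1, h3, h2, h4.symm⟩

theorem meets_of_neg {n R : ℕ} {p q : ℕ → ZMod n}
    (h : meetsWithin n R (fun t => - p t) (fun t => - q t)) :
    meetsWithin n R p q := by
  rcases h with ⟨t, h1, h2⟩ | ⟨t, h1, h2, h3, h4⟩
  · exact Or.inl ⟨t, h1, neg_injective h2⟩
  · exact Or.inr ⟨t, h1, neg_injective h2, neg_injective h3, fun h => h4 (by simp [h])⟩

theorem core_aux (n : ℕ) (hn : 3 ≤ n) (A B C : ℕ → ZMod n)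
    (hA : ∀ t, A (t+1) = A t ∨ A (t+1) = A t + 1)
    (hB : ∀ t, B (t+1) = B t ∨ B (t+1) = B t + 1)
    (hC : ∀ t, C (t+1) = C t ∨ C (t+1) = C t - 1)
    (hBC : ∀ t, B (t+1) = B t → C (t+1) = C t → C t = B t + 1)
    (x₀ y₀ : ℤ) (hx₀ : 1 ≤ x₀) (hxy₀ : x₀ < y₀) (hy₀ : y₀ ≤ n - 1)
    (hxA : C 0 = A 0 + x₀) (hyB : C 0 = B 0 + y₀) :
    meetsWithin n (n-2) A B ∨ meetsWithin n (n-2) A C ∨ meetsWithin n (n-2) B C := by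
  by_contra hcon
  simp only [not_or] at hcon
  obtain ⟨nAB, nAC, nBC⟩ := hcon
  have key : ∀ t : ℕ, t ≤ n - 2 → ∃ x y : ℤ, 1 ≤ x ∧ x < y ∧ y ≤ n - 1 - t ∧
      C t = A t + x ∧ C t = B t + y := by
    intro t
    induction t with
    | zero => intro _; exact ⟨x₀, y₀, hx₀, hxy₀, by simpa using hy₀, hxA, hyB⟩
    | succ t ih =>
      intro ht
      obtain ⟨x, y, hx, hxy, hy, hCA, hCB⟩ := ih (by omega)
      have eAB : A (t+1) ≠ B (t+1) := fun h => nAB (Or.inl ⟨t+1, ht, h⟩)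
      have eAC : A (t+1) ≠ C (t+1) := fun h => nAC (Or.inl ⟨t+1, ht, h⟩)
      have eAC0 : A t ≠ C t := fun h => nAC (Or.inl ⟨t, by omega, h⟩)
      obtain ⟨α, ha, hα⟩ : ∃ α : ℤ, (α = 0 ∨ α = 1) ∧ A (t+1) = A t + α := by
        rcases hA t with h | h
        · exact ⟨0, by simp, by simp [h]⟩
        · exact ⟨1, by simp, by simp [h]⟩
      obtain ⟨β, hb, hβ⟩ : ∃ α : ℤ, (α = 0 ∨ α = 1) ∧ B (t+1) = B t + α := by
        rcases hB t with h | h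
        · exact ⟨0, by simp, by simp [h]⟩
        · exact ⟨1, by simp, by simp [h]⟩
      obtain ⟨γ, hc, hγ⟩ : ∃ α : ℤ, (α = 0 ∨ α = 1) ∧ C (t+1) = C t - α := by
        rcases hC t with h | h
        · exact ⟨0, by simp, by simp [h]⟩
        · exact ⟨1, by simp, by simp [h]⟩
      have e1 : C (t+1) = A (t+1) + ((x - α - γ : ℤ) : ZMod n) := by
        rw [hγ, hα, hCA]; push_cast; ring
      have e2 : C (t+1) = B (t+1) + ((y - β - γ : ℤ) : ZMod n) := by
        rw [hγ, hβ, hCB]; push_cast; ring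
      have f1 : x - α - γ ≠ 0 := by
        intro h; rw [h] at e1; exact eAC (by simpa using e1.symm)
      have f2 : x - α - γ ≠ y - β - γ := by
        intro h; rw [h, e2] at e1
        exact eAB (add_right_cancel e1).symm
      have f3 : ¬ (x = 1 ∧ α = 1 ∧ γ = 1) := by
        rintro ⟨rfl, rfl, rfl⟩
        refine nAC (Or.inr ⟨t, ht, ?_, ?_, eAC0⟩)
        · rw [hα, hCA]
        · rw [hγ, hCA]; simp
      have f4 : ¬ (β = 0 ∧ γ = 0) := by
        rintro ⟨rfl, rfl⟩
        have h := hBC t (by simpa using hβ) (by simpa using hγ)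
        rw [hCB] at h
        have h' : ((y : ℤ) : ZMod n) = ((1 : ℤ) : ZMod n) := by
          simpa using add_left_cancel h
        rw [ZMod.intCast_eq_intCast_iff_dvd_sub] at h'
        have h3 : (n : ℤ) ∣ y - 1 := by
          rw [← neg_sub]; exact (dvd_neg).2 h'
        have := Int.le_of_dvd (by omega) h3
        omega
      refine ⟨x - α - γ, y - β - γ, ?_, ?_, ?_, e1, e2⟩
      · omega
      · omega
      · push_cast; omega
  obtain ⟨x, y, hx, hxy, hy, -, -⟩ := key (n-2) le_rfl
  omega

theorem core (n : ℕ) (hn : 3 ≤ n) (A B C : ℕ → ZMod n)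
    (hA : ∀ t, A (t+1) = A t ∨ A (t+1) = A t + 1)
    (hB : ∀ t, B (t+1) = B t ∨ B (t+1) = B t + 1)
    (hC : ∀ t, C (t+1) = C t ∨ C (t+1) = C t - 1)
    (hAC : ∀ t, A (t+1) = A t → C (t+1) = C t → C t = A t + 1)
    (hBC : ∀ t, B (t+1) = B t → C (t+1) = C t → C t = B t + 1) :
    meetsWithin n (n-2) A B ∨ meetsWithin n (n-2) A C ∨ meetsWithin n (n-2) B C := by
  by_cases hab : A 0 = B 0
  · exact Or.inl (Or.inl ⟨0, by omega, hab⟩)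
  by_cases hac : A 0 = C 0
  · exact Or.inr (Or.inl (Or.inl ⟨0, by omega, hac⟩))
  by_cases hbc : B 0 = C 0
  · exact Or.inr (Or.inr (Or.inl ⟨0, by omega, hbc⟩))
  haveI : NeZero n := ⟨by omega⟩
  have gap : ∀ a c : ZMod n, a ≠ c → ∃ x : ℤ, 1 ≤ x ∧ x ≤ n - 1 ∧ c = a + x := by
    intro a c h
    refine ⟨((c - a).val : ℤ), ?_, ?_, ?_⟩
    · have : (c - a).val ≠ 0 := by
        rw [Ne, ZMod.val_eq_zero, sub_eq_zero]; exact fun h' => h h'.symm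
      omega
    · have := ZMod.val_lt (c - a)
      omega
    · simp
  obtain ⟨x, hx, hx', ex⟩ := gap _ _ hac
  obtain ⟨y, hy, hy', ey⟩ := gap _ _ hbc
  rcases lt_trichotomy x y with h | h | h
  · exact core_aux n hn A B C hA hB hC hBC x y hx h hy' ex ey
  · subst h
    rw [ex] at ey
    exact absurd (add_right_cancel ey) hab
  · rcases core_aux n hn B A C hB hA hC hAC y x hy h hx' ey ex with h | h | h
    · exact Or.inl (meets_symm h)
    · exact Or.inr (Or.inr h)
    · exact Or.inr (Or.inl h)

theorem pos_true (n : ℕ) (e : ℕ → Option (ZMod n)) (v : ZMod n) (t : ℕ) :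
    (ringPos n e (fun _ => true) v (t+1) = ringPos n e (fun _ => true) v t ∧
      e t = some (ringPos n e (fun _ => true) v t)) ∨
    ringPos n e (fun _ => true) v (t+1) = ringPos n e (fun _ => true) v t + 1 := by
  simp only [ringPos, ringStep]
  by_cases h : e t = some (ringPos n e (fun _ => true) v t) <;> simp [h]

theorem pos_false (n : ℕ) (e : ℕ → Option (ZMod n)) (v : ZMod n) (t : ℕ) :
    (ringPos n e (fun _ => false) v (t+1) = ringPos n e (fun _ => false) v t ∧
      e t = some (ringPos n e (fun _ => false) v t - 1)) ∨
    ringPos n e (fun _ => false) v (t+1) = ringPos n e (fun _ => false) v t - 1 := by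
  simp only [ringPos, ringStep]
  by_cases h : e t = some (ringPos n e (fun _ => false) v t - 1) <;> simp [h]

theorem blocked (n : ℕ) (hn : 3 ≤ n) (e : ℕ → Option (ZMod n)) (v w : ZMod n) (t : ℕ)
    (h1 : ringPos n e (fun _ => true) v (t+1) = ringPos n e (fun _ => true) v t)
    (h2 : ringPos n e (fun _ => false) w (t+1) = ringPos n e (fun _ => false) w t) :
    ringPos n e (fun _ => false) w t = ringPos n e (fun _ => true) v t + 1 := by
  haveI : Fact (1 < n) := ⟨by omega⟩
  rcases pos_true n e v t with ⟨-, h⟩ | h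
  · rcases pos_false n e w t with ⟨-, h'⟩ | h'
    · rw [h] at h'
      rw [Option.some.inj h']; ring
    · rw [h2] at h'
      simp [eq_sub_iff_add_eq] at h'
  · rw [h1] at h
    simp at h

theorem meet_ttf (n : ℕ) (hn : 3 ≤ n) (e : ℕ → Option (ZMod n)) (u v w : ZMod n) :
    meetsWithin n (n-2) (ringPos n e (fun _ => true) u) (ringPos n e (fun _ => true) v) ∨
    meetsWithin n (n-2) (ringPos n e (fun _ => true) u) (ringPos n e (fun _ => false) w) ∨
    meetsWithin n (n-2) (ringPos n e (fun _ => true) v) (ringPos n e (fun _ => false) w) :=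
  core n hn _ _ _ (fun t => (pos_true n e u t).imp_left And.left)
    (fun t => (pos_true n e v t).imp_left And.left)
    (fun t => (pos_false n e w t).imp_left And.left)
    (fun t => blocked n hn e u w t) (fun t => blocked n hn e v w t)

theorem meet_fft (n : ℕ) (hn : 3 ≤ n) (e : ℕ → Option (ZMod n)) (u v w : ZMod n) :
    meetsWithin n (n-2) (ringPos n e (fun _ => false) u) (ringPos n e (fun _ => false) v) ∨
    meetsWithin n (n-2) (ringPos n e (fun _ => false) u) (ringPos n e (fun _ => true) w) ∨
    meetsWithin n (n-2) (ringPos n e (fun _ => false) v) (ringPos n e (fun _ => true) w) := by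
  have hF : ∀ (v : ZMod n) (t : ℕ),
      - ringPos n e (fun _ => false) v (t+1) = - ringPos n e (fun _ => false) v t ∨
      - ringPos n e (fun _ => false) v (t+1) = - ringPos n e (fun _ => false) v t + 1 := by
    intro v t
    rcases pos_false n e v t with ⟨h, -⟩ | h
    · left; rw [h]
    · right; rw [h]; ring
  have hT : ∀ (v : ZMod n) (t : ℕ),
      - ringPos n e (fun _ => true) v (t+1) = - ringPos n e (fun _ => true) v t ∨
      - ringPos n e (fun _ => true) v (t+1) = - ringPos n e (fun _ => true) v t - 1 := by
    intro v t
    rcases pos_true n e v t with ⟨h, -⟩ | h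
    · left; rw [h]
    · right; rw [h]; ring
  have hb : ∀ (v : ZMod n) (t : ℕ),
      - ringPos n e (fun _ => false) v (t+1) = - ringPos n e (fun _ => false) v t →
      - ringPos n e (fun _ => true) w (t+1) = - ringPos n e (fun _ => true) w t →
      - ringPos n e (fun _ => true) w t = - ringPos n e (fun _ => false) v t + 1 := by
    intro v t h1 h2
    rw [blocked n hn e w v t (neg_injective h2) (neg_injective h1)]; ring
  exact (core n hn (fun t => - ringPos n e (fun _ => false) u t)
    (fun t => - ringPos n e (fun _ => false) v t)
    (fun t => - ringPos n e (fun _ => true) w t) (hF u) (hF v) (hT w) (hb u) (hb v)).imp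
    meets_of_neg (Or.imp meets_of_neg meets_of_neg)

/-- Lemma 2 (lem:meeting): if three robots on a dynamic ring of size `n ≥ 3` each attempt
to move in a fixed direction in every round, and their directions are not all equal, then
for every adversary some two of them meet within `n - 2` rounds. -/
theorem two_of_three_meet (n : ℕ) (hn : 3 ≤ n)
    (v₁ v₂ v₃ : ZMod n) (d₁ d₂ d₃ : Bool)
    (hd : ¬ (d₁ = d₂ ∧ d₂ = d₃))
    (e : ℕ → Option (ZMod n)) :
    meetsWithin n (n - 2)
        (ringPos n e (fun _ => d₁) v₁) (ringPos n e (fun _ => d₂) v₂) ∨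
    meetsWithin n (n - 2)
        (ringPos n e (fun _ => d₁) v₁) (ringPos n e (fun _ => d₃) v₃) ∨
    meetsWithin n (n - 2)
        (ringPos n e (fun _ => d₂) v₂) (ringPos n e (fun _ => d₃) v₃) := by
  have sy := @meets_symm n (n - 2)
  cases d₁ <;> cases d₂ <;> cases d₃
  · simp at hd
  · exact meet_fft n hn e v₁ v₂ v₃
  · rcases meet_fft n hn e v₁ v₃ v₂ with h | h | h
    · exact Or.inr (Or.inl h)
    · exact Or.inl h
    · exact Or.inr (Or.inr (sy h))
  · rcases meet_ttf n hn e v₂ v₃ v₁ with h | h | h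
    · exact Or.inr (Or.inr h)
    · exact Or.inl (sy h)
    · exact Or.inr (Or.inl (sy h))
  · rcases meet_fft n hn e v₂ v₃ v₁ with h | h | h
    · exact Or.inr (Or.inr h)
    · exact Or.inl (sy h)
    · exact Or.inr (Or.inl (sy h))
  · rcases meet_ttf n hn e v₁ v₃ v₂ with h | h | h
    · exact Or.inr (Or.inl h)
    · exact Or.inl h
    · exact Or.inr (Or.inr (sy h))
  · exact meet_ttf n hn e v₁ v₂ v₃
  · simp at hd
end

section
/- Let n ≥ 3. On the dynamic ring ZMod n, robots A and B start at the same node v₀, with A attempting to move clockwise in every round and B attempting to move counterclockwise in every round. A third robot C starts at an arbitrary node and in every round attempts to move in a direction given by an arbitrary function d_C : ℕ → Bool (C never voluntarily stays put, but its direction may change arbitrarily from round to round). Then for every adversary e : ℕ → Option (ZMod n), robot C meets robot A or robot C meets robot B within n rounds (they occupy the same node at some time t ≤ n, or cross the same edge in opposite directions in some round t with t + 1 ≤ n). -/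
theorem ring_move_true (n : ℕ) (e : Option (ZMod n)) (p : ZMod n) :
    ∃ x : ℤ, ringStep n e true p = p + x ∧ (x = 1 ∨ (x = 0 ∧ e = some p)) := by
  by_cases h : e = some p
  · exact ⟨0, by simp [ringStep, h], by simp [h]⟩
  · exact ⟨1, by simp [ringStep, h], by simp⟩

theorem ring_move_false (n : ℕ) (e : Option (ZMod n)) (p : ZMod n) :
    ∃ x : ℤ, ringStep n e false p = p - x ∧ (x = 1 ∨ (x = 0 ∧ e = some (p - 1))) := by
  by_cases h : e = some (p - 1)
  · exact ⟨0, by simp [ringStep, h], by simp [h]⟩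
  · exact ⟨1, by simp [ringStep, h], by simp⟩

theorem ring_move_any (n : ℕ) (e : Option (ZMod n)) (d : Bool) (p : ZMod n) :
    ∃ x : ℤ, ringStep n e d p = p + x ∧ (x = 1 ∨ x = 0 ∨ x = -1) := by
  cases d
  · obtain ⟨x, hx, h⟩ := ring_move_false n e p
    exact ⟨-x, by rw [hx]; push_cast; ring, by omega⟩
  · obtain ⟨x, hx, h⟩ := ring_move_true n e p
    exact ⟨x, hx, by omega⟩

/-- One round without a meeting: the arc from `A` through `C` to `B` shrinks. -/
theorem ring_arc_shrinks (n : ℕ) (e : Option (ZMod n)) (d : Bool) (A B C : ZMod n) (a b : ℤ)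
    (ha : 1 ≤ a) (hb : 1 ≤ b) (hab : a + b ≤ n) (hC : C = A + a) (hB : B = C + b)
    (h1 : ringStep n e d C ≠ ringStep n e true A)
    (h2 : ringStep n e d C ≠ ringStep n e false B)
    (h3 : ¬ (ringStep n e d C = A ∧ ringStep n e true A = C))
    (h4 : ¬ (ringStep n e d C = B ∧ ringStep n e false B = C)) :
    ∃ a' b' : ℤ, 1 ≤ a' ∧ 1 ≤ b' ∧ a' + b' + 1 ≤ a + b ∧
      ringStep n e d C = ringStep n e true A + a' ∧
      ringStep n e false B = ringStep n e d C + b' := by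
  obtain ⟨x, hx, hx'⟩ := ring_move_true n e A
  obtain ⟨y, hy, hy'⟩ := ring_move_false n e B
  obtain ⟨z, hz, hz'⟩ := ring_move_any n e d C
  rw [hx, hz] at h1 h3
  rw [hy, hz] at h2 h4
  rw [hx, hy, hz]
  have hxy : 1 ≤ x + y := by
    by_contra hlt
    have hx0 : e = some A := by
      rcases hx' with h | h
      · omega
      · exact h.2
    have hy0 : e = some (B - 1) := by
      rcases hy' with h | h
      · omega
      · exact h.2
    have hAB : A = B - 1 := by
      rw [hx0] at hy0
      exact Option.some.inj hy0
    have h0 : ((a + b - 1 : ℤ) : ZMod n) = 0 := by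
      push_cast
      rw [hB, hC] at hAB
      linear_combination -hAB
    replace h0 := (CharP.intCast_eq_zero_iff (ZMod n) n _).1 h0
    have := Int.le_of_dvd (by omega) h0
    omega
  have g1 : a + z - x ≠ 0 := by
    intro h
    have h' : ((a + z - x : ℤ) : ZMod n) = 0 := by rw [h]; simp
    push_cast at h'
    apply h1
    rw [hC]
    linear_combination h'
  have g2 : b - z - y ≠ 0 := by
    intro h
    have h' : ((b - z - y : ℤ) : ZMod n) = 0 := by rw [h]; simp
    push_cast at h'
    apply h2
    rw [hB]
    linear_combination -h'
  have g3 : ¬ (a = 1 ∧ z = -1 ∧ x = 1) := by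
    rintro ⟨rfl, rfl, rfl⟩
    apply h3
    rw [hC]
    constructor <;> push_cast <;> ring
  have g4 : ¬ (b = 1 ∧ z = 1 ∧ y = 1) := by
    rintro ⟨rfl, rfl, rfl⟩
    apply h4
    rw [hB]
    constructor <;> push_cast <;> ring
  have hx2 : x = 1 ∨ x = 0 := hx'.imp_right And.left
  have hy2 : y = 1 ∨ y = 0 := hy'.imp_right And.left
  refine ⟨a + z - x, b - z - y, by omega, by omega, by omega, ?_, ?_⟩
  · rw [hC]; push_cast; ring
  · rw [hB]; push_cast; ring

/-- Lemma 5 / Lemma 7 core claim: robots `A` and `B` start at the same node `v₀` and move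
in fixed opposite directions (A clockwise, B counterclockwise) in every round, while a
third robot `C` starts anywhere and attempts to move in every round in an arbitrary
(possibly changing) direction `dC`. Then for every adversary, `C` meets `A` or `C` meets
`B` within `n` rounds. -/
theorem third_robot_meets_A_or_B (n : ℕ) (hn : 3 ≤ n)
    (v₀ vC : ZMod n) (dC : ℕ → Bool) (e : ℕ → Option (ZMod n)) :
    meetsWithin n n (ringPos n e dC vC) (ringPos n e (fun _ => true) v₀) ∨
    meetsWithin n n (ringPos n e dC vC) (ringPos n e (fun _ => false) v₀) := by
  by_contra hcon
  rw [not_or] at hcon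
  obtain ⟨hA, hB⟩ := hcon
  unfold meetsWithin at hA hB
  push Not at hA hB
  obtain ⟨hA1, hA2⟩ := hA
  obtain ⟨hB1, hB2⟩ := hB
  have key : ∀ t : ℕ, t ≤ n → ∃ a b : ℤ, 1 ≤ a ∧ 1 ≤ b ∧ a + b + t ≤ n ∧
      ringPos n e dC vC t = ringPos n e (fun _ => true) v₀ t + a ∧
      ringPos n e (fun _ => false) v₀ t = ringPos n e dC vC t + b := by
    intro t
    induction t with
    | zero =>
      intro _
      have h0 : vC ≠ v₀ := hA1 0 (Nat.zero_le n)
      haveI : NeZero n := ⟨by omega⟩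
      have hv : (vC - v₀).val ≠ 0 := by
        rw [Ne, ZMod.val_eq_zero]
        exact sub_ne_zero.2 h0
      have hlt := ZMod.val_lt (vC - v₀)
      have hc : (((vC - v₀).val : ℕ) : ZMod n) = vC - v₀ := ZMod.natCast_zmod_val _
      refine ⟨(vC - v₀).val, n - (vC - v₀).val, by omega, by omega, by push_cast; omega, ?_, ?_⟩
      · simp only [ringPos, Int.cast_natCast, hc]; ring
      · simp only [ringPos, Int.cast_sub, Int.cast_natCast, hc, ZMod.natCast_self]; ring
    | succ t ih =>
      intro ht
      obtain ⟨a, b, ha, hb, hab, h1, h2⟩ := ih (by omega)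
      obtain ⟨a', b', ha', hb', hab', h1', h2'⟩ :=
        ring_arc_shrinks n (e t) (dC t) _ _ _ a b ha hb (by omega) h1 h2
          (hA1 (t + 1) ht) (hB1 (t + 1) ht)
          (fun h => hA1 t (by omega) (hA2 t ht h.1 h.2))
          (fun h => hB1 t (by omega) (hB2 t ht h.1 h.2))
      exact ⟨a', b', ha', hb', by push_cast; omega, h1', h2'⟩
  obtain ⟨a, b, ha, hb, hab, -⟩ := key n le_rfl
  omega
end

section
/- Let n ≥ 3. On the dynamic ring ZMod n, robots A and B start at the same node v₀, with A attempting to move clockwise in every round and B attempting to move counterclockwise in every round; let a t and b t be their successful-move counters, so p_A t = v₀ + a t and p_B t = v₀ − b t. Fix any adversary e : ℕ → Option (ZMod n) and suppose t ≥ 1 is a round with a (t−1) + b (t−1) < n ≤ a t + b t (the first time the combined counter reaches n). Then exactly one of the following holds: (i) a t + b t = n and p_A t = p_B t (the robots meet at a node and the sum of their counters equals exactly n), or (ii) a t + b t = n + 1, p_A t = p_B (t−1) and p_B t = p_A (t−1) (the robots crossed the same edge in opposite directions in round t−1, and the sum of their counters equals exactly n + 1). -/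
/-- Successful-move counter: number of rounds `t' < t` in which the robot's position
changed. -/
def successCount (n : ℕ) (p : ℕ → ZMod n) (t : ℕ) : ℕ :=
  ((Finset.range t).filter (fun t' => p (t' + 1) ≠ p t')).card

theorem successCount_succ_aux (n : ℕ) (p : ℕ → ZMod n) (t : ℕ) :
    successCount n p (t + 1) = successCount n p t + if p (t + 1) ≠ p t then 1 else 0 := by
  unfold successCount
  rw [Finset.range_add_one, Finset.filter_insert]
  split_ifs with h
  · rw [Finset.card_insert_of_notMem (by simp)]
  · rfl

theorem step_true_aux (n : ℕ) (hn : 3 ≤ n) (e : ℕ → Option (ZMod n)) (v : ZMod n) (t : ℕ) :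
    (ringPos n e (fun _ => true) v (t + 1) = ringPos n e (fun _ => true) v t ∧
      successCount n (ringPos n e (fun _ => true) v) (t + 1) =
        successCount n (ringPos n e (fun _ => true) v) t) ∨
    (ringPos n e (fun _ => true) v (t + 1) = ringPos n e (fun _ => true) v t + 1 ∧
      successCount n (ringPos n e (fun _ => true) v) (t + 1) =
        successCount n (ringPos n e (fun _ => true) v) t + 1) := by
  have : Fact (1 < n) := ⟨by omega⟩
  rw [successCount_succ_aux]
  have h : ringPos n e (fun _ => true) v (t + 1) =
    ringStep n (e t) true (ringPos n e (fun _ => true) v t) := rfl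
  rw [h]
  unfold ringStep
  by_cases hc : e t = some (ringPos n e (fun _ => true) v t)
  · left; simp [hc]
  · right; simp [hc]

theorem step_false_aux (n : ℕ) (hn : 3 ≤ n) (e : ℕ → Option (ZMod n)) (v : ZMod n) (t : ℕ) :
    (ringPos n e (fun _ => false) v (t + 1) = ringPos n e (fun _ => false) v t ∧
      successCount n (ringPos n e (fun _ => false) v) (t + 1) =
        successCount n (ringPos n e (fun _ => false) v) t) ∨
    (ringPos n e (fun _ => false) v (t + 1) = ringPos n e (fun _ => false) v t - 1 ∧
      successCount n (ringPos n e (fun _ => false) v) (t + 1) =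
        successCount n (ringPos n e (fun _ => false) v) t + 1) := by
  have : Fact (1 < n) := ⟨by omega⟩
  rw [successCount_succ_aux]
  have h : ringPos n e (fun _ => false) v (t + 1) =
    ringStep n (e t) false (ringPos n e (fun _ => false) v t) := rfl
  rw [h]
  unfold ringStep
  by_cases hc : e t = some (ringPos n e (fun _ => false) v t - 1)
  · left; simp [hc]
  · right; simp [hc]

theorem pos_diff_aux (n : ℕ) (hn : 3 ≤ n) (e : ℕ → Option (ZMod n)) (v : ZMod n) (t : ℕ) :
    ringPos n e (fun _ => true) v t = ringPos n e (fun _ => false) v t +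
      ((successCount n (ringPos n e (fun _ => true) v) t +
        successCount n (ringPos n e (fun _ => false) v) t : ℕ) : ZMod n) := by
  induction t with
  | zero =>
    have h0 : ∀ p : ℕ → ZMod n, successCount n p 0 = 0 := fun p => rfl
    rw [h0, h0]
    simp [ringPos]
  | succ t ih =>
    push_cast at ih
    rcases step_true_aux n hn e v t with ⟨h1, h2⟩ | ⟨h1, h2⟩ <;>
    rcases step_false_aux n hn e v t with ⟨h3, h4⟩ | ⟨h3, h4⟩ <;>
    · rw [h1, h2, h3, h4, ih]
      push_cast
      ring

/-- Stage 4 size-detection claim: robots `A` (always clockwise) and `B` (always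
counterclockwise) start at the same node `v₀`; `a t`, `b t` are their successful-move
counters. If `t ≥ 1` is the first round with `a t + b t ≥ n`, then exactly one of the
following holds: (i) `a t + b t = n` and the robots are at the same node, or
(ii) `a t + b t = n + 1` and the robots crossed the same edge in opposite directions in
round `t - 1`. -/
theorem meeting_counter_dichotomy (n : ℕ) (hn : 3 ≤ n)
    (v₀ : ZMod n) (e : ℕ → Option (ZMod n)) (t : ℕ) (ht : 1 ≤ t)
    (hprev :
      successCount n (ringPos n e (fun _ => true) v₀) (t - 1) +
        successCount n (ringPos n e (fun _ => false) v₀) (t - 1) < n)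
    (hnow :
      n ≤ successCount n (ringPos n e (fun _ => true) v₀) t +
        successCount n (ringPos n e (fun _ => false) v₀) t) :
    Xor'
      (successCount n (ringPos n e (fun _ => true) v₀) t +
          successCount n (ringPos n e (fun _ => false) v₀) t = n ∧
        ringPos n e (fun _ => true) v₀ t = ringPos n e (fun _ => false) v₀ t)
      (successCount n (ringPos n e (fun _ => true) v₀) t +
          successCount n (ringPos n e (fun _ => false) v₀) t = n + 1 ∧
        ringPos n e (fun _ => true) v₀ t = ringPos n e (fun _ => false) v₀ (t - 1) ∧
        ringPos n e (fun _ => false) v₀ t = ringPos n e (fun _ => true) v₀ (t - 1)) := by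
  obtain ⟨t, rfl⟩ : ∃ s, t = s + 1 := ⟨t - 1, by omega⟩
  simp only [Nat.add_sub_cancel] at hprev ⊢
  have hd := pos_diff_aux n hn e v₀ t
  have hd' := pos_diff_aux n hn e v₀ (t + 1)
  have hA := step_true_aux n hn e v₀ t
  have hB := step_false_aux n hn e v₀ t
  by_cases hs : successCount n (ringPos n e (fun _ => true) v₀) (t + 1) +
        successCount n (ringPos n e (fun _ => false) v₀) (t + 1) = n
  · left
    rw [hs] at hd'
    refine ⟨⟨hs, by simpa using hd'⟩, fun h => by omega⟩
  · right
    rcases hA with ⟨h1, h2⟩ | ⟨h1, h2⟩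
    · omega
    rcases hB with ⟨h3, h4⟩ | ⟨h3, h4⟩
    · omega
    have hk : successCount n (ringPos n e (fun _ => true) v₀) t +
        successCount n (ringPos n e (fun _ => false) v₀) t = n - 1 := by omega
    have hc : ((n - 1 : ℕ) : ZMod n) = -1 := by
      rw [Nat.cast_sub (by omega)]
      simp
    rw [hk, hc] at hd
    refine ⟨⟨by omega, ?_, ?_⟩, fun h => hs h.1⟩
    · rw [h1, hd]; ring
    · rw [h3, hd]; ring
end

section
/- Let n ≥ 3 and let M = {−1, 0, +1} denote the possible intended actions of a robot in a round (counterclockwise, stay, clockwise). There exists an adversary strategy Adv : ZMod n → ZMod n → M → M → Option (ZMod n), giving the removed edge as a function of the two robots' current positions and current intents, with the following property: for all intent sequences m₁, m₂ : ℕ → M and all start positions q₁ ≠ q₂ in ZMod n, the trajectories p₁, p₂ : ℕ → ZMod n defined by p_i 0 = q_i and, in round t with removed edge r = Adv (p₁ t) (p₂ t) (m₁ t) (m₂ t): a robot at p with intent +1 moves to p+1 iff r ≠ some p (else stays), with intent −1 moves to p−1 iff r ≠ some (p−1) (else stays), and with intent 0 stays — satisfy p₁ t ≠ p₂ t for all t,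 and for no t do p₁ (t+1) = p₂ t and p₂ (t+1) = p₁ t with p₁ t ≠ p₂ t. In other words, the adversary, removing at most one edge per round, can forever prevent the two robots from occupying the same node or from crossing the same edge in opposite directions, no matter how the robots choose their moves. -/
/-- Intended action of a robot in a round: counterclockwise (−1), stay (0), or
clockwise (+1). -/
inductive Move : Type
  | ccw : Move
  | stay : Move
  | cw : Move

/-- One round of movement on the ring `ZMod n` when the adversary removes edge `r`
(edge `i` joins `i` and `i + 1`): with intent `cw` a robot at `p` moves to `p + 1` iff
`r ≠ some p`; with intent `ccw` it moves to `p - 1` iff `r ≠ some (p - 1)`; with intent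
`stay` it stays. -/
def moveStep (n : ℕ) (r : Option (ZMod n)) (m : Move) (p : ZMod n) : ZMod n :=
  match m with
  | Move.cw => if r ≠ some p then p + 1 else p
  | Move.ccw => if r ≠ some (p - 1) then p - 1 else p
  | Move.stay => p

/-- Joint trajectory of two robots with start nodes `q₁ q₂` and intent sequences
`m₁ m₂` against the positional adversary `Adv`, which removes an edge as a function of
the two current positions and the two current intents. -/
def twoTraj (n : ℕ) (Adv : ZMod n → ZMod n → Move → Move → Option (ZMod n))
    (m₁ m₂ : ℕ → Move) (q₁ q₂ : ZMod n) : ℕ → ZMod n × ZMod n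
  | 0 => (q₁, q₂)
  | t + 1 =>
      let s := twoTraj n Adv m₁ m₂ q₁ q₂ t
      let r := Adv s.1 s.2 (m₁ t) (m₂ t)
      (moveStep n r (m₁ t) s.1, moveStep n r (m₂ t) s.2)

theorem exists_safe_edge (n : ℕ) (hn : 3 ≤ n) (p q : ZMod n) (a b : Move) :
    ∃ r : Option (ZMod n), p ≠ q →
      moveStep n r a p ≠ moveStep n r b q ∧
      ¬ (moveStep n r a p = q ∧ moveStep n r b q = p) := by
  have h1 : (1 : ZMod n) ≠ 0 := by
    intro h
    have h' : ((1 : ℕ) : ZMod n) = 0 := by exact_mod_cast h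
    rw [ZMod.natCast_eq_zero_iff] at h'
    have := Nat.le_of_dvd (by norm_num) h'
    omega
  have h2 : (2 : ZMod n) ≠ 0 := by
    intro h
    have h' : ((2 : ℕ) : ZMod n) = 0 := by exact_mod_cast h
    rw [ZMod.natCast_eq_zero_iff] at h'
    have := Nat.le_of_dvd (by norm_num) h'
    omega
  cases a <;> cases b
  · refine ⟨none, fun h => ?_⟩
    simp only [moveStep]
    grind
  · refine ⟨some (p - 1), fun h => ?_⟩
    simp only [moveStep]
    grind
  · refine ⟨some q, fun h => ?_⟩
    simp only [moveStep]
    grind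
  · refine ⟨some (q - 1), fun h => ?_⟩
    simp only [moveStep]
    grind
  · refine ⟨none, fun h => ?_⟩
    simp only [moveStep]
    grind
  · refine ⟨some q, fun h => ?_⟩
    simp only [moveStep]
    grind
  · refine ⟨some p, fun h => ?_⟩
    simp only [moveStep]
    grind
  · refine ⟨some p, fun h => ?_⟩
    simp only [moveStep]
    grind
  · refine ⟨none, fun h => ?_⟩
    simp only [moveStep]
    grind

/-- Observation 1: on a ring of size `n ≥ 3` there is an adversary strategy, removing at
most one edge per round as a function of the robots' positions and intents, that forever
prevents two robots starting at distinct nodes from occupying the same node or crossing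
the same edge in opposite directions, whatever their intent sequences are. -/
theorem adversary_prevents_two_robots_meeting (n : ℕ) (hn : 3 ≤ n) :
    ∃ Adv : ZMod n → ZMod n → Move → Move → Option (ZMod n),
      ∀ (m₁ m₂ : ℕ → Move) (q₁ q₂ : ZMod n), q₁ ≠ q₂ →
        (∀ t, (twoTraj n Adv m₁ m₂ q₁ q₂ t).1 ≠ (twoTraj n Adv m₁ m₂ q₁ q₂ t).2) ∧
        (∀ t, ¬ ((twoTraj n Adv m₁ m₂ q₁ q₂ (t + 1)).1 = (twoTraj n Adv m₁ m₂ q₁ q₂ t).2 ∧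
                 (twoTraj n Adv m₁ m₂ q₁ q₂ (t + 1)).2 = (twoTraj n Adv m₁ m₂ q₁ q₂ t).1 ∧
                 (twoTraj n Adv m₁ m₂ q₁ q₂ t).1 ≠ (twoTraj n Adv m₁ m₂ q₁ q₂ t).2)) := by
  choose Adv hAdv using exists_safe_edge n hn
  refine ⟨Adv, fun m₁ m₂ q₁ q₂ hq => ?_⟩
  have key : ∀ t, (twoTraj n Adv m₁ m₂ q₁ q₂ t).1 ≠ (twoTraj n Adv m₁ m₂ q₁ q₂ t).2 := by
    intro t
    induction t with
    | zero => exact hq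
    | succ t ih => exact (hAdv _ _ (m₁ t) (m₂ t) ih).1
  refine ⟨key, fun t h => ?_⟩
  exact (hAdv _ _ (m₁ t) (m₂ t) (key t)).2 ⟨h.1, h.2.1⟩
end
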